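/- arXiv:1602.07004 — 3 statements merged into one kernel-verified Lean document; each statement's English description precedes it below -/
import Mathlib

section
/- Let μ be a tempered Borel measure on ℝ^d whose Fourier transform in the Parseval sense is a locally integrable function f : ℝ^d → [0,∞] with f(x) < ∞ for every x ≠ 0. Then for any t > 0, sup_{η ∈ ℝ^d} ∫_{ℝ^d} (sin(t|ξ+η|)/|ξ+η|)² μ(dξ) ≤ 2 max(t²,1) ∫_{ℝ^d} (1/(1+|ξ|²)) μ(dξ), where sin(t r)/r is interpreted as t when r = 0. -/
/-!
The proof reduces the supremum over `η` to `η = 0` by writing the Bessel weight as a mixture of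
Gaussians, for which the Parseval relation can be applied directly.

* Pointwise, `(sin (t r) / r)² ≤ 2 max(t², 1) / (1 + r²)`, so it suffices to show
  `∫ 1 / (1 + |ξ + η|²) dμ ≤ ∫ 1 / (1 + |ξ|²) dμ` for every `η`.
* Since `1 / (1 + r²) = ∫₀^∞ e^{-s} e^{-s r²} ds`, Tonelli's theorem (a tempered measure is
  s-finite) reduces this to `∫ e^{-s|ξ+η|²} dμ ≤ ∫ e^{-s|ξ|²} dμ` for each `s > 0`
  (`lintegral_gaussian_shift_le`).
* The function `ξ ↦ e^{-s|ξ+η|²}` is, up to a nonzero constant independent of `η`, the Fourier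
  transform of the modulated Gaussian `e^{-|x|²/(4s)} e^{-i η·x}`, a Schwartz function. By the
  Parseval relation both sides are, up to the same constant, integrals of such Schwartz functions
  against the *nonnegative* function `f`; the triangle inequality removes the modulation and
  gives the value at `η = 0`.

No growth bound on `f` is needed: `‖∫ φ f‖ ≤ ∫ ‖φ‖ f` holds for Bochner integrals
whether or not `φ f` is integrable.
-/

open MeasureTheory Real
open scoped ENNReal RealInnerProductSpace

noncomputable section

/-- Euclidean space `ℝ^d`. -/
abbrev Ed (d : ℕ) := EuclideanSpace ℝ (Fin d)

/-- Fourier transform on `ℝ^d`: `ℱφ(ξ) = ∫ e^{-i ξ·x} φ(x) dx`. -/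
def FTd (d : ℕ) (φ : Ed d → ℂ) (ξ : Ed d) : ℂ :=
  ∫ x : Ed d, Complex.exp (-(Complex.I * ((⟪ξ, x⟫ : ℝ) : ℂ))) * φ x

/-- A Borel measure on `ℝ^d` is tempered if `∫ (1+|ξ|²)^{-k} dμ < ∞` for some `k ∈ ℕ`. -/
def IsTempered (d : ℕ) (μ : Measure (Ed d)) : Prop :=
  ∃ k : ℕ, ∫⁻ ξ, ENNReal.ofReal ((1 + ‖ξ‖ ^ 2) ^ (-(k : ℝ))) ∂μ < ⊤

/-- Local integrability for `[0,∞]`-valued functions on `ℝ^d`. -/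
def LocIntENN (d : ℕ) (g : Ed d → ℝ≥0∞) : Prop :=
  ∀ s : Set (Ed d), IsCompact s → ∫⁻ x in s, g x < ⊤

/-- `g` is the Fourier transform of `μ` in the Parseval sense:
`∫ φ(x) g(x) dx = (2π)^{-d} ∫ ℱφ(ξ) μ(dξ)` for every Schwartz function `φ` on `ℝ^d`. -/
def ParsevalFT (d : ℕ) (g : Ed d → ℝ≥0∞) (μ : Measure (Ed d)) : Prop :=
  ∀ φ : SchwartzMap (Ed d) ℂ,
    ∫ x, φ x * (((g x).toReal : ℝ) : ℂ) =
      (((2 * π) ^ d : ℝ)⁻¹ : ℂ) * ∫ ξ, FTd d (fun y => φ y) ξ ∂μ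

/-- `sinc a r = sin(a r)/r`, interpreted as `a` when `r = 0`. -/
def sinc (a r : ℝ) : ℝ := if r = 0 then a else Real.sin (a * r) / r

/-! ### Modulated Gaussians as Schwartz functions -/

/-- Polynomial weights are absorbed by Gaussians, with an explicit constant. -/
lemma pow_mul_exp_neg_le (k : ℕ) {s : ℝ} (hs : 0 < s) (r : ℝ) :
    (1 + r ^ 2) ^ k * Real.exp (-s * r ^ 2) ≤ Real.exp s * k.factorial / s ^ k := by
  have h := Real.pow_div_factorial_le_exp (x := s * (1 + r ^ 2)) (by positivity) k
  have hf : (0 : ℝ) < k.factorial := by exact_mod_cast k.factorial_pos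
  rw [div_le_iff₀ hf, mul_pow] at h
  rw [le_div_iff₀ (by positivity)]
  have e : Real.exp (s * (1 + r ^ 2)) * Real.exp (-s * r ^ 2) = Real.exp s := by
    rw [← Real.exp_add]; congr 1; ring
  calc (1 + r ^ 2) ^ k * Real.exp (-s * r ^ 2) * s ^ k
      = (s ^ k * (1 + r ^ 2) ^ k) * Real.exp (-s * r ^ 2) := by ring
    _ ≤ (Real.exp (s * (1 + r ^ 2)) * k.factorial) * Real.exp (-s * r ^ 2) := by gcongr
    _ = Real.exp s * k.factorial := by rw [← e]; ring

lemma iteratedDeriv_cexp_mul_ofReal (c : ℂ) (n : ℕ) :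
    iteratedDeriv n (fun r : ℝ => Complex.exp (c * r)) =
      fun r : ℝ => c ^ n * Complex.exp (c * r) := by
  induction n with
  | zero => simp
  | succ n ih =>
    rw [iteratedDeriv_succ, ih]
    ext r
    have h1 : HasDerivAt (fun r : ℝ => c * (r : ℂ)) (c * 1) r :=
      (Complex.ofRealCLM.hasDerivAt (x := r)).const_mul c
    have h2 := (h1.cexp).const_mul (c ^ n)
    rw [h2.deriv]
    ring

lemma contDiff_cexp_mul_ofReal (c : ℂ) {n : WithTop ℕ∞} :
    ContDiff ℝ n (fun r : ℝ => Complex.exp (c * r)) :=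
  (contDiff_const.mul Complex.ofRealCLM.contDiff).cexp

lemma norm_iteratedFDeriv_cexp_mul_ofReal (c : ℂ) (n : ℕ) (r : ℝ) :
    ‖iteratedFDeriv ℝ n (fun r : ℝ => Complex.exp (c * r)) r‖ =
      ‖c‖ ^ n * Real.exp (c.re * r) := by
  rw [norm_iteratedFDeriv_eq_norm_iteratedDeriv, iteratedDeriv_cexp_mul_ofReal]
  simp [Complex.norm_exp]

/-- The Gaussian `x ↦ e^{-b|x|²}`, `b > 0`, as a Schwartz function. -/
def gaussianSchwartz (d : ℕ) (b : ℝ) (hb : 0 < b) : SchwartzMap (Ed d) ℂ where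
  toFun := (fun r : ℝ => Complex.exp (-(b : ℂ) * r)) ∘ fun x : Ed d => ‖x‖ ^ 2
  smooth' := (contDiff_cexp_mul_ofReal _).comp (contDiff_norm_sq ℝ)
  decay' := by
    intro k n
    obtain ⟨l, C, hC, hq⟩ :=
      (Function.hasTemperateGrowth_norm_sq (Ed d)).norm_iteratedFDeriv_le_uniform n
    set m := k + l * n with hm
    refine ⟨n.factorial * (1 + b) ^ n * (1 + C) ^ n * 2 ^ m *
      (Real.exp b * m.factorial / b ^ m), fun x => ?_⟩
    -- Faà di Bruno: `D` dominates the derivatives of `|x|²`, and being at least `1` also `D ^ i`.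
    have key := norm_iteratedFDeriv_comp_le (𝕜 := ℝ) (N := n)
      (g := fun r : ℝ => Complex.exp (-(b : ℂ) * r)) (f := fun x : Ed d => ‖x‖ ^ 2) (n := n)
      (contDiff_cexp_mul_ofReal _) (contDiff_norm_sq ℝ) le_rfl x
      (C := (1 + b) ^ n * Real.exp (-b * ‖x‖ ^ 2)) (D := (1 + C) * (1 + ‖x‖) ^ l)
      (by
        intro i hi
        rw [norm_iteratedFDeriv_cexp_mul_ofReal]
        simp only [norm_neg, Complex.norm_real, Real.norm_of_nonneg hb.le, Complex.neg_re,
          Complex.ofReal_re]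
        gcongr
        calc b ^ i ≤ (1 + b) ^ i := by gcongr; linarith
          _ ≤ (1 + b) ^ n := pow_le_pow_right₀ (by linarith) hi)
      (by
        intro i hi hin
        calc _ ≤ C * (1 + ‖x‖) ^ l := hq i hin x
          _ ≤ (1 + C) * (1 + ‖x‖) ^ l := by gcongr; linarith
          _ ≤ _ := by
            apply le_self_pow₀ _ (by omega)
            exact one_le_mul_of_one_le_of_one_le (by linarith)
              (one_le_pow₀ (by linarith [norm_nonneg x])))
    have hx : 0 ≤ ‖x‖ := norm_nonneg x
    have h1 : ‖x‖ ^ k ≤ (1 + ‖x‖) ^ k := by gcongr; linarith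
    have h2 : (1 + ‖x‖) ^ m ≤ 2 ^ m * (1 + ‖x‖ ^ 2) ^ m := by
      rw [← mul_pow]; gcongr; nlinarith [sq_nonneg (‖x‖ - 1)]
    have h3 := pow_mul_exp_neg_le m hb ‖x‖
    calc _ ≤ (1 + ‖x‖) ^ k * (n.factorial * ((1 + b) ^ n * Real.exp (-b * ‖x‖ ^ 2)) *
          ((1 + C) * (1 + ‖x‖) ^ l) ^ n) := by gcongr
      _ = n.factorial * (1 + b) ^ n * (1 + C) ^ n * ((1 + ‖x‖) ^ m * Real.exp (-b * ‖x‖ ^ 2)) := by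
        rw [mul_pow, ← pow_mul, hm, pow_add]; ring
      _ ≤ n.factorial * (1 + b) ^ n * (1 + C) ^ n *
          (2 ^ m * (1 + ‖x‖ ^ 2) ^ m * Real.exp (-b * ‖x‖ ^ 2)) := by gcongr
      _ = n.factorial * (1 + b) ^ n * (1 + C) ^ n * 2 ^ m *
          ((1 + ‖x‖ ^ 2) ^ m * Real.exp (-b * ‖x‖ ^ 2)) := by ring
      _ ≤ _ := by gcongr

lemma hasTemperateGrowth_cexp_inner (d : ℕ) (η : Ed d) :
    (fun x : Ed d => Complex.exp (-Complex.I * ((⟪η, x⟫ : ℝ) : ℂ))).HasTemperateGrowth := by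
  have h : (fun r : ℝ => Complex.exp (-Complex.I * r)).HasTemperateGrowth := by
    refine ⟨contDiff_cexp_mul_ofReal _, fun n => ⟨0, 1, fun r => ?_⟩⟩
    rw [norm_iteratedFDeriv_cexp_mul_ofReal]
    simp
  exact h.comp (Function.hasTemperateGrowth_inner_right η)

/-- The modulated Gaussian `x ↦ e^{-i η·x} e^{-b|x|²}`, `b > 0`, as a Schwartz function. -/
def modGaussian (d : ℕ) (b : ℝ) (hb : 0 < b) (η : Ed d) : SchwartzMap (Ed d) ℂ :=
  SchwartzMap.smulLeftCLM ℂ (fun x : Ed d => Complex.exp (-Complex.I * ((⟪η, x⟫ : ℝ) : ℂ)))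
    (gaussianSchwartz d b hb)

lemma modGaussian_apply (d : ℕ) (b : ℝ) (hb : 0 < b) (η x : Ed d) :
    modGaussian d b hb η x =
      Complex.exp (-Complex.I * ((⟪η, x⟫ : ℝ) : ℂ)) * ((Real.exp (-b * ‖x‖ ^ 2) : ℝ) : ℂ) := by
  rw [modGaussian, SchwartzMap.smulLeftCLM_apply_apply (hasTemperateGrowth_cexp_inner d η),
    smul_eq_mul]
  congr 1
  change Complex.exp (-(b : ℂ) * ((‖x‖ ^ 2 : ℝ) : ℂ)) = _
  push_cast
  rfl

/-- The constant in front of the Gaussian does not depend on the modulation `η`. -/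
lemma FTd_modGaussian (d : ℕ) (s : ℝ) (hs : 0 < s) (hb : 0 < 1 / (4 * s)) (η ξ : Ed d) :
    FTd d (fun y => modGaussian d (1 / (4 * s)) hb η y) ξ =
      ((π / (1 / (4 * s) : ℝ) : ℂ) ^ ((d : ℂ) / 2)) *
        ((Real.exp (-s * ‖ξ + η‖ ^ 2) : ℝ) : ℂ) := by
  have h := GaussianFourier.integral_cexp_neg_mul_sq_norm_add (V := Ed d)
    (b := ((1 / (4 * s) : ℝ) : ℂ)) (by simpa using hs) (-Complex.I) (ξ + η)
  rw [finrank_euclideanSpace_fin] at h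
  unfold FTd
  have hsc : (s : ℂ) ≠ 0 := by exact_mod_cast hs.ne'
  calc _ = ∫ v : Ed d, Complex.exp (-((1 / (4 * s) : ℝ) : ℂ) * (‖v‖ : ℂ) ^ 2 +
        -Complex.I * ((⟪ξ + η, v⟫ : ℝ) : ℂ)) := by
        congr 1
        ext v
        beta_reduce
        rw [modGaussian_apply, Complex.ofReal_exp, ← Complex.exp_add, ← Complex.exp_add,
          inner_add_left]
        congr 1
        push_cast
        ring
    _ = _ := by
        rw [h, Complex.ofReal_exp]
        congr 2
        push_cast
        rw [neg_sq, Complex.I_sq]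
        field_simp

/-! ### Gaussian and Bessel integrals of a tempered measure -/

section Tempered

variable {d : ℕ} {μ : Measure (Ed d)}

lemma IsTempered.sFinite (hμ : IsTempered d μ) : SFinite μ := by
  obtain ⟨k, hk⟩ := hμ
  set g : Ed d → ℝ≥0∞ := fun ξ => ENNReal.ofReal ((1 + ‖ξ‖ ^ 2) ^ (-(k : ℝ))) with hg
  have hgm : Measurable g := by fun_prop
  have : IsFiniteMeasure (μ.withDensity g) := isFiniteMeasure_withDensity hk.ne
  have h := withDensity_inv_same (μ := μ) hgm
    (Filter.Eventually.of_forall fun ξ => by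
      have : 0 < (1 + ‖ξ‖ ^ 2) ^ (-(k : ℝ)) := by positivity
      simpa [hg] using this)
    (Filter.Eventually.of_forall fun ξ => by simp [hg])
  rw [← h]
  infer_instance

lemma IsTempered.integrable_gaussian (hμ : IsTempered d μ) {s : ℝ} (hs : 0 < s) :
    Integrable (fun ξ : Ed d => Real.exp (-s * ‖ξ‖ ^ 2)) μ := by
  obtain ⟨k, hk⟩ := hμ
  refine ⟨by fun_prop, ?_⟩
  rw [hasFiniteIntegral_iff_ofReal (Filter.Eventually.of_forall fun _ => (Real.exp_pos _).le)]
  set M := Real.exp s * k.factorial / s ^ k with hM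
  have hM0 : 0 ≤ M := by positivity
  calc _ ≤ ∫⁻ ξ, ENNReal.ofReal M * ENNReal.ofReal ((1 + ‖ξ‖ ^ 2) ^ (-(k : ℝ))) ∂μ := by
        refine lintegral_mono fun ξ => ?_
        rw [← ENNReal.ofReal_mul hM0]
        apply ENNReal.ofReal_le_ofReal
        rw [Real.rpow_neg (by positivity), Real.rpow_natCast, ← div_eq_mul_inv,
          le_div_iff₀ (by positivity), mul_comm]
        exact pow_mul_exp_neg_le k hs ‖ξ‖
    _ = ENNReal.ofReal M * ∫⁻ ξ, ENNReal.ofReal ((1 + ‖ξ‖ ^ 2) ^ (-(k : ℝ))) ∂μ :=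
        lintegral_const_mul _ (by fun_prop)
    _ < ⊤ := ENNReal.mul_lt_top ENNReal.ofReal_lt_top hk

/-- Integrability of the shifted Gaussian follows from that of a wider centred one:
`|ξ|² / 2 ≤ |ξ + η|² + |η|²`. -/
lemma IsTempered.integrable_gaussian_shift (hμ : IsTempered d μ) {s : ℝ} (hs : 0 < s)
    (η : Ed d) : Integrable (fun ξ : Ed d => Real.exp (-s * ‖ξ + η‖ ^ 2)) μ := by
  refine ((hμ.integrable_gaussian (half_pos hs)).const_mul (Real.exp (s * ‖η‖ ^ 2))).mono'
    (by fun_prop) (Filter.Eventually.of_forall fun ξ => ?_)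
  rw [Real.norm_of_nonneg (Real.exp_pos _).le, ← Real.exp_add]
  apply Real.exp_le_exp.mpr
  have h1 : ‖ξ‖ ≤ ‖ξ + η‖ + ‖η‖ := by
    simpa using norm_sub_le (ξ + η) η
  have h2 : ‖ξ‖ ^ 2 ≤ (‖ξ + η‖ + ‖η‖) ^ 2 := by gcongr
  have h3 : ‖ξ‖ ^ 2 ≤ 2 * ‖ξ + η‖ ^ 2 + 2 * ‖η‖ ^ 2 := by
    nlinarith [sq_nonneg (‖ξ + η‖ - ‖η‖)]
  nlinarith

/-- Among all translates of a Gaussian, the centred one has the largest `μ`-integral. This is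
where the nonnegativity of the Fourier transform `f` of `μ` enters. -/
lemma integral_gaussian_shift_le {f : Ed d → ℝ≥0∞} (hP : ParsevalFT d f μ) {s : ℝ} (hs : 0 < s)
    (η : Ed d) :
    ∫ ξ, Real.exp (-s * ‖ξ + η‖ ^ 2) ∂μ ≤ ∫ ξ, Real.exp (-s * ‖ξ‖ ^ 2) ∂μ := by
  have hb : 0 < 1 / (4 * s) := by positivity
  set b := 1 / (4 * s) with hbdef
  obtain ⟨K, hK0, hK⟩ : ∃ K : ℂ, K ≠ 0 ∧ ∀ η : Ed d,
      ∫ x, modGaussian d b hb η x * (((f x).toReal : ℝ) : ℂ) =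
        K * ((∫ ξ, Real.exp (-s * ‖ξ + η‖ ^ 2) ∂μ : ℝ) : ℂ) := by
    refine ⟨(((2 * π) ^ d : ℝ)⁻¹ : ℂ) * (π / (b : ℝ) : ℂ) ^ ((d : ℂ) / 2), ?_, fun η => ?_⟩
    · have h1 : (π : ℂ) ≠ 0 := by exact_mod_cast Real.pi_ne_zero
      have h2 : (b : ℂ) ≠ 0 := by exact_mod_cast hb.ne'
      refine mul_ne_zero ?_ ?_
      · exact inv_ne_zero (by exact_mod_cast (by positivity : ((2 * π) ^ d : ℝ) ≠ 0))
      · rw [Complex.cpow_def_of_ne_zero (div_ne_zero h1 h2)]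
        exact Complex.exp_ne_zero _
    · rw [hP, mul_assoc]
      congr 1
      simp_rw [hbdef, FTd_modGaussian d s hs hb η]
      rw [integral_const_mul, integral_complex_ofReal]
  have hη := hK η
  have h0 := hK 0
  simp only [add_zero] at h0
  set A := ∫ ξ, Real.exp (-s * ‖ξ + η‖ ^ 2) ∂μ
  set B := ∫ ξ, Real.exp (-s * ‖ξ‖ ^ 2) ∂μ
  have hA : 0 ≤ A := integral_nonneg fun _ => (Real.exp_pos _).le
  have hB : 0 ≤ B := integral_nonneg fun _ => (Real.exp_pos _).le
  have hN : 0 ≤ ∫ x, Real.exp (-b * ‖x‖ ^ 2) * (f x).toReal :=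
    integral_nonneg fun x => mul_nonneg (Real.exp_pos _).le ENNReal.toReal_nonneg
  have e0 : ‖K‖ * B = ∫ x, Real.exp (-b * ‖x‖ ^ 2) * (f x).toReal := by
    have : ‖K * (B : ℂ)‖ = ‖K‖ * B := by
      rw [norm_mul, Complex.norm_real, Real.norm_of_nonneg hB]
    rw [← this, ← h0]
    have e : ∀ x : Ed d, modGaussian d b hb 0 x * (((f x).toReal : ℝ) : ℂ) =
        ((Real.exp (-b * ‖x‖ ^ 2) * (f x).toReal : ℝ) : ℂ) := fun x => by
      rw [modGaussian_apply]; simp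
    simp_rw [e]
    rw [integral_complex_ofReal, Complex.norm_real, Real.norm_of_nonneg hN]
  have e1 : ‖K‖ * A ≤ ∫ x, Real.exp (-b * ‖x‖ ^ 2) * (f x).toReal := by
    have : ‖K * (A : ℂ)‖ = ‖K‖ * A := by
      rw [norm_mul, Complex.norm_real, Real.norm_of_nonneg hA]
    rw [← this, ← hη]
    refine (norm_integral_le_integral_norm _).trans_eq ?_
    congr 1
    ext x
    rw [modGaussian_apply, norm_mul, norm_mul, Complex.norm_real, Complex.norm_real,
      Real.norm_of_nonneg (Real.exp_pos _).le, Real.norm_of_nonneg ENNReal.toReal_nonneg,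
      Complex.norm_exp]
    simp
  rw [← e0] at e1
  exact le_of_mul_le_mul_left e1 (norm_pos_iff.mpr hK0)

lemma lintegral_gaussian_shift_le (hμ : IsTempered d μ) {f : Ed d → ℝ≥0∞}
    (hP : ParsevalFT d f μ) {s : ℝ} (hs : 0 < s) (η : Ed d) :
    ∫⁻ ξ, ENNReal.ofReal (Real.exp (-s * ‖ξ + η‖ ^ 2)) ∂μ ≤
      ∫⁻ ξ, ENNReal.ofReal (Real.exp (-s * ‖ξ‖ ^ 2)) ∂μ := by
  rw [← ofReal_integral_eq_lintegral_ofReal (hμ.integrable_gaussian_shift hs η)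
      (Filter.Eventually.of_forall fun _ => (Real.exp_pos _).le),
    ← ofReal_integral_eq_lintegral_ofReal (hμ.integrable_gaussian hs)
      (Filter.Eventually.of_forall fun _ => (Real.exp_pos _).le)]
  exact ENNReal.ofReal_le_ofReal (integral_gaussian_shift_le hP hs η)

/-- The Bessel weight is a mixture of Gaussians:
`1 / (1 + r²) = ∫₀^∞ e^{-s} e^{-s r²} ds`. -/
lemma ofReal_bessel_eq_lintegral (r : ℝ) :
    ENNReal.ofReal (1 / (1 + r ^ 2)) =
      ∫⁻ s in Set.Ioi (0 : ℝ),
        ENNReal.ofReal (Real.exp (-s)) * ENNReal.ofReal (Real.exp (-s * r ^ 2)) := by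
  have ha : -(1 + r ^ 2) < 0 := by nlinarith [sq_nonneg r]
  have h := integral_exp_mul_Ioi ha 0
  have hi : IntegrableOn (fun x : ℝ => Real.exp (-(1 + r ^ 2) * x)) (Set.Ioi 0) :=
    integrableOn_exp_mul_Ioi ha 0
  have e : 1 / (1 + r ^ 2) = ∫ x : ℝ in Set.Ioi 0, Real.exp (-(1 + r ^ 2) * x) := by
    rw [h, neg_div_neg_eq]; simp
  rw [e, ofReal_integral_eq_lintegral_ofReal hi
    (Filter.Eventually.of_forall fun _ => (Real.exp_pos _).le)]
  refine lintegral_congr fun s => ?_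
  rw [← ENNReal.ofReal_mul (Real.exp_pos _).le, ← Real.exp_add]
  congr 2
  ring

lemma lintegral_bessel_shift_le (hμ : IsTempered d μ) {f : Ed d → ℝ≥0∞}
    (hP : ParsevalFT d f μ) (η : Ed d) :
    ∫⁻ ξ, ENNReal.ofReal (1 / (1 + ‖ξ + η‖ ^ 2)) ∂μ ≤
      ∫⁻ ξ, ENNReal.ofReal (1 / (1 + ‖ξ‖ ^ 2)) ∂μ := by
  have := hμ.sFinite
  have swap : ∀ η : Ed d, ∫⁻ ξ, ENNReal.ofReal (1 / (1 + ‖ξ + η‖ ^ 2)) ∂μ =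
      ∫⁻ s in Set.Ioi (0 : ℝ), ENNReal.ofReal (Real.exp (-s)) *
        ∫⁻ ξ, ENNReal.ofReal (Real.exp (-s * ‖ξ + η‖ ^ 2)) ∂μ := by
    intro η
    simp_rw [ofReal_bessel_eq_lintegral]
    rw [lintegral_lintegral_swap (by fun_prop)]
    refine lintegral_congr fun s => ?_
    rw [lintegral_const_mul _ (by fun_prop)]
  have h0 := swap 0
  simp only [add_zero] at h0
  rw [swap η, h0]
  refine setLIntegral_mono' measurableSet_Ioi fun s hs => ?_
  exact mul_le_mul_right (lintegral_gaussian_shift_le hμ hP hs η) _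

end Tempered

/-! ### Comparison of the wave kernel with the Bessel weight -/

lemma sinc_sq_le (t r : ℝ) :
    (sinc t r) ^ 2 ≤ 2 * max (t ^ 2) 1 * (1 / (1 + r ^ 2)) := by
  have h1 : t ^ 2 ≤ max (t ^ 2) 1 := le_max_left _ _
  have h2 : 1 ≤ max (t ^ 2) 1 := le_max_right _ _
  rw [mul_one_div, le_div_iff₀ (by positivity)]
  unfold _root_.sinc
  split_ifs with hr
  · subst hr; nlinarith
  · have hr2 : 0 < r ^ 2 := by positivity
    have hs1 : Real.sin (t * r) ^ 2 ≤ t ^ 2 * r ^ 2 := by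
      rw [← mul_pow]
      exact sq_le_sq.mpr Real.abs_sin_le_abs
    have hs2 := Real.sin_sq_le_one (t * r)
    have e : (Real.sin (t * r) / r) ^ 2 * (1 + r ^ 2) =
        Real.sin (t * r) ^ 2 / r ^ 2 + Real.sin (t * r) ^ 2 := by
      field_simp
    have : Real.sin (t * r) ^ 2 / r ^ 2 ≤ t ^ 2 := (div_le_iff₀ hr2).mpr hs1
    rw [e]
    linarith

/-- For any `t > 0`,
`sup_η ∫ (sin(t|ξ+η|)/|ξ+η|)² μ(dξ) ≤ 2 max(t²,1) ∫ 1/(1+|ξ|²) μ(dξ)`. -/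
theorem stmt7 (d : ℕ) (μ : Measure (Ed d)) (hμt : IsTempered d μ)
    (f : Ed d → ℝ≥0∞) (hfm : Measurable f) (hfloc : LocIntENN d f)
    (hffin : ∀ x : Ed d, x ≠ 0 → f x < ⊤) (hP : ParsevalFT d f μ)
    (t : ℝ) (ht : 0 < t) :
    (⨆ η : Ed d, ∫⁻ ξ, ENNReal.ofReal ((sinc t ‖ξ + η‖) ^ 2) ∂μ) ≤
      ENNReal.ofReal (2 * max (t ^ 2) 1) *
        ∫⁻ ξ, ENNReal.ofReal (1 / (1 + ‖ξ‖ ^ 2)) ∂μ := by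
  refine iSup_le fun η => ?_
  calc _ ≤ ∫⁻ ξ, ENNReal.ofReal (2 * max (t ^ 2) 1) *
          ENNReal.ofReal (1 / (1 + ‖ξ + η‖ ^ 2)) ∂μ := by
        refine lintegral_mono fun ξ => ?_
        rw [← ENNReal.ofReal_mul (by positivity)]
        exact ENNReal.ofReal_le_ofReal (sinc_sq_le t _)
    _ = ENNReal.ofReal (2 * max (t ^ 2) 1) *
          ∫⁻ ξ, ENNReal.ofReal (1 / (1 + ‖ξ + η‖ ^ 2)) ∂μ :=
        lintegral_const_mul _ (by fun_prop)
    _ ≤ _ := by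
        exact mul_le_mul_right (lintegral_bessel_shift_le hμt hP η) _
end
end

section
/- Let β ∈ (0,1) and let μ be a tempered Borel measure on ℝ^d with ∫_{ℝ^d} (1/(1+|ξ|²))^β μ(dξ) < ∞, whose Fourier transform in the Parseval sense is a locally integrable function f : ℝ^d → [0,∞] with f(x) < ∞ for every x ≠ 0. Then for any T > 0 and M > 0 there exists a constant C > 0 (depending on T, d, M, β) such that for every h ∈ ℝ with |h| ≤ M, sup_{t ∈ [0, min(T, T−h)]} sup_{η ∈ ℝ^d} ∫_{ℝ^d} | sin((t+h)|ξ+η|)/|ξ+η| − sin(t|ξ+η|)/|ξ+η| |² μ(dξ) ≤ C |h|^{2−2β}, where sin(a r)/r is interpreted as a when r = 0. -/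
/-!
The increment `Δ(r) = sin((t+h)r)/r - sin(tr)/r` satisfies `|Δ| ≤ |h|` and `r|Δ| ≤ 2`.
Writing `Δ² = (Δ²)^{1-β} (Δ²)^β` and using the first bound on one factor and both on the other
gives `Δ² ≤ (M²+4)^β |h|^{2-2β} (1+r²)^{-β}` (`sinc_sub_sq_le`). It remains to bound
`∫ (1+|ξ+η|²)^{-β} μ(dξ)` uniformly in `η`, and in fact its maximum is attained at `η = 0`
(`lintegral_weight_translate_le`).

The latter follows by Gaussian subordination,
`Γ(β) (1+r²)^{-β} = ∫₀^∞ s^{β-1} e^{-s} e^{-s r²} ds`, from the same claim for each Gaussian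
`e^{-s|ξ|²}` (`integral_gaussian_translate_le`). Up to a constant independent of `η`, the function
`ξ ↦ e^{-s|ξ+η|²}` is the Fourier transform of the Schwartz function
`x ↦ e^{-|x|²/(4s)} e^{-i⟨η, x⟩}`, so by Parseval its `μ`-integral is a multiple of
`∫ e^{-|x|²/(4s)} e^{-i⟨η, x⟩} f(x) dx`, which for `f ≥ 0` is largest in modulus at `η = 0`.
That the modulated Gaussian is a Schwartz function follows from the derivative bounds of
`exists_iteratedFDeriv_cexp_le`.
-/

open MeasureTheory Real
open scoped ENNReal RealInnerProductSpace

noncomputable section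

/-! ### Modulated Gaussians as Schwartz functions -/

open scoped ContDiff in
/-- Every derivative of `exp ∘ q`, with `q` of temperate growth, is bounded by a polynomial times
`|exp ∘ q|`. -/
lemma exists_iteratedFDeriv_cexp_le {E : Type*} [NormedAddCommGroup E] [NormedSpace ℝ E]
    {q : E → ℂ} (hq : q.HasTemperateGrowth) (n : ℕ) :
    ∃ (k : ℕ) (C : ℝ), 0 ≤ C ∧ ∀ N ≤ n, ∀ x : E,
      ‖iteratedFDeriv ℝ N (fun y => Complex.exp (q y)) x‖ ≤
        C * (1 + ‖x‖) ^ k * ‖Complex.exp (q x)‖ := by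
  have hg : ContDiff ℝ ∞ (fun y => Complex.exp (q y)) := hq.1.cexp
  induction n with
  | zero =>
    refine ⟨0, 1, zero_le_one, fun N hN x => ?_⟩
    obtain rfl : N = 0 := by omega
    simp
  | succ n ih =>
    obtain ⟨k, C, hC, h⟩ := ih
    obtain ⟨k', C', hC', h'⟩ := hq.norm_iteratedFDeriv_le_uniform (n + 1)
    refine ⟨k + k', C + ∑ i ∈ Finset.range (n + 1), (n.choose i : ℝ) * C * C', by positivity,
      fun N hN x => ?_⟩
    have h1 : (1 : ℝ) ≤ 1 + ‖x‖ := by simp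
    have hsum : 0 ≤ ∑ i ∈ Finset.range (n + 1), (n.choose i : ℝ) * C * C' := by positivity
    rcases Nat.lt_or_ge N (n + 1) with hlt | hge
    · refine (h N (by omega) x).trans ?_
      gcongr
      · linarith
      · omega
    obtain rfl : N = n + 1 := by omega
    have hd : fderiv ℝ (fun y => Complex.exp (q y)) =
        fun y => Complex.exp (q y) • fderiv ℝ q y := by
      funext y
      exact ((hq.1.differentiable (by simp) y).hasFDerivAt.cexp).fderiv
    rw [← norm_iteratedFDeriv_fderiv, hd]
    refine (norm_iteratedFDeriv_smul_le (N := ∞) hg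
      (hq.1.fderiv_right (m := ∞) (by simp)) x (mod_cast le_top)).trans ?_
    calc _ ≤ ∑ i ∈ Finset.range (n + 1), ((n.choose i : ℝ) * C * C') *
            ((1 + ‖x‖) ^ (k + k') * ‖Complex.exp (q x)‖) := by
          refine Finset.sum_le_sum fun i hi => ?_
          rw [Finset.mem_range] at hi
          rw [norm_iteratedFDeriv_fderiv]
          have e1 := h i (by omega) x
          have e2 := h' (n - i + 1) (by omega) x
          calc _ ≤ (n.choose i : ℝ) * (C * (1 + ‖x‖) ^ k * ‖Complex.exp (q x)‖) *
                (C' * (1 + ‖x‖) ^ k') := by gcongr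
            _ = _ := by ring
      _ ≤ _ := by
          rw [← Finset.sum_mul, mul_assoc]
          gcongr
          linarith

/-- The exponent `-b|x|² - i⟨η, x⟩` of a modulated Gaussian. -/
def gaussExponent (d : ℕ) (b : ℝ) (η x : Ed d) : ℂ :=
  ((-b * ‖x‖ ^ 2 : ℝ) : ℂ) - Complex.I * ((⟪η, x⟫ : ℝ) : ℂ)

lemma gaussExponent_temperate (d : ℕ) (b : ℝ) (η : Ed d) :
    (gaussExponent d b η).HasTemperateGrowth := by
  have h1 : (fun x : Ed d => ((-b * ‖x‖ ^ 2 : ℝ) : ℂ)).HasTemperateGrowth :=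
    Function.Complex.hasTemperateGrowth_ofReal.comp
      ((Function.HasTemperateGrowth.const (-b)).mul (Function.hasTemperateGrowth_norm_sq (Ed d)))
  have h2 : (fun x : Ed d => ((⟪η, x⟫ : ℝ) : ℂ)).HasTemperateGrowth :=
    Function.Complex.hasTemperateGrowth_ofReal.comp (Function.hasTemperateGrowth_inner_right η)
  exact h1.sub ((Function.HasTemperateGrowth.const Complex.I).mul h2)

lemma norm_cexp_gaussExponent (d : ℕ) (b : ℝ) (η x : Ed d) :
    ‖Complex.exp (gaussExponent d b η x)‖ = Real.exp (-b * ‖x‖ ^ 2) := by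
  rw [Complex.norm_exp]
  congr 1
  rw [gaussExponent, Complex.sub_re, Complex.ofReal_re]
  simp

lemma exists_pow_mul_gaussian_le (b : ℝ) (hb : 0 < b) (k : ℕ) :
    ∃ C : ℝ, ∀ r : ℝ, 0 ≤ r → (1 + r) ^ k * Real.exp (-b * r ^ 2) ≤ C := by
  refine ⟨k.factorial * Real.exp (1 + 1 / (4 * b)), fun r hr => ?_⟩
  have h1 := Real.pow_div_factorial_le_exp (1 + r) (by positivity) k
  rw [div_le_iff₀ (by positivity)] at h1
  have h2 : 1 + r + -b * r ^ 2 ≤ 1 + 1 / (4 * b) := by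
    have : 1 / (4 * b) - r + b * r ^ 2 = b * (r - 1 / (2 * b)) ^ 2 := by field_simp; ring
    nlinarith [mul_nonneg hb.le (sq_nonneg (r - 1 / (2 * b)))]
  calc _ ≤ (Real.exp (1 + r) * k.factorial) * Real.exp (-b * r ^ 2) := by gcongr
    _ = k.factorial * Real.exp (1 + r + -b * r ^ 2) := by rw [Real.exp_add (1 + r)]; ring
    _ ≤ _ := by gcongr

/-- The modulated Gaussian `x ↦ exp(-b|x|² - i⟨η, x⟩)` as a Schwartz function. -/
def gaussSchwartz (d : ℕ) (b : ℝ) (hb : 0 < b) (η : Ed d) : SchwartzMap (Ed d) ℂ where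
  toFun x := Complex.exp (gaussExponent d b η x)
  smooth' := (gaussExponent_temperate d b η).1.cexp
  decay' k n := by
    obtain ⟨m, C, hC, h⟩ := exists_iteratedFDeriv_cexp_le (gaussExponent_temperate d b η) n
    obtain ⟨C', h'⟩ := exists_pow_mul_gaussian_le b hb (k + m)
    refine ⟨C * C', fun x => ?_⟩
    have h1 := h n le_rfl x
    rw [norm_cexp_gaussExponent] at h1
    calc _ ≤ (1 + ‖x‖) ^ k * (C * (1 + ‖x‖) ^ m * Real.exp (-b * ‖x‖ ^ 2)) := by
          gcongr
          linarith
      _ = C * ((1 + ‖x‖) ^ (k + m) * Real.exp (-b * ‖x‖ ^ 2)) := by ring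
      _ ≤ _ := by gcongr; exact h' _ (norm_nonneg x)

lemma gaussSchwartz_apply (d : ℕ) (b : ℝ) (hb : 0 < b) (η x : Ed d) :
    gaussSchwartz d b hb η x = Complex.exp (gaussExponent d b η x) := rfl

/-! ### Gaussian integrals against `μ` -/

lemma FTd_gaussSchwartz (d : ℕ) (s : ℝ) (hs : 0 < s) (η ξ : Ed d) :
    FTd d (fun y => gaussSchwartz d (1 / (4 * s)) (by positivity) η y) ξ =
      (π / ((1 / (4 * s) : ℝ) : ℂ)) ^ (d / 2 : ℂ) *
        ((Real.exp (-s * ‖ξ + η‖ ^ 2) : ℝ) : ℂ) := by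
  have hs' : (s : ℂ) ≠ 0 := by exact_mod_cast hs.ne'
  have := GaussianFourier.integral_cexp_neg_mul_sq_norm_add (V := Ed d)
    (b := ((1 / (4 * s) : ℝ) : ℂ)) (by rw [Complex.ofReal_re]; positivity) (-Complex.I) (ξ + η)
  rw [finrank_euclideanSpace_fin] at this
  rw [FTd]
  convert this using 2
  · funext x
    rw [gaussSchwartz_apply, gaussExponent, ← Complex.exp_add, inner_add_left]
    congr 1
    push_cast
    ring
  · push_cast
    congr 1
    rw [neg_sq, Complex.I_sq]
    field_simp

/-- Since `f ≥ 0`, modulating the test Gaussian can only decrease the left side of Parseval's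
identity in modulus; hence translating the Gaussian on the spectral side cannot increase its
`μ`-integral. No integrability of `f` against the Gaussian is needed: both Bochner integrals
on the left vanish simultaneously when it fails. -/
lemma integral_gaussian_translate_le (d : ℕ) (f : Ed d → ℝ≥0∞) (μ : Measure (Ed d))
    (hP : ParsevalFT d f μ) (s : ℝ) (hs : 0 < s) (η : Ed d) :
    ∫ ξ, Real.exp (-s * ‖ξ + η‖ ^ 2) ∂μ ≤ ∫ ξ, Real.exp (-s * ‖ξ‖ ^ 2) ∂μ := by
  have hb : 0 < 1 / (4 * s) := by positivity
  set b := 1 / (4 * s) with hbdef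
  set K : ℂ := (((2 * π) ^ d : ℝ)⁻¹ : ℂ) * (π / (b : ℂ)) ^ (d / 2 : ℂ) with hK
  have hK0 : 0 < ‖K‖ := by
    rw [norm_pos_iff, hK]
    refine mul_ne_zero (inv_ne_zero (by exact_mod_cast (by positivity : ((2 * π) ^ d : ℝ) ≠ 0))) ?_
    rw [Ne, Complex.cpow_eq_zero_iff, not_and_or]
    left
    exact div_ne_zero (by exact_mod_cast Real.pi_ne_zero) (by exact_mod_cast hb.ne')
  have key : ∀ η : Ed d, ∫ x, gaussSchwartz d b hb η x * (((f x).toReal : ℝ) : ℂ) =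
      K * ((∫ ξ, Real.exp (-s * ‖ξ + η‖ ^ 2) ∂μ : ℝ) : ℂ) := by
    intro η
    rw [hP, integral_congr_ae (Filter.Eventually.of_forall fun ξ => FTd_gaussSchwartz d s hs η ξ),
      integral_const_mul, integral_complex_ofReal, hK, mul_assoc]
  have hnorm : ∀ (η : Ed d) x, ‖gaussSchwartz d b hb η x * (((f x).toReal : ℝ) : ℂ)‖ =
      Real.exp (-b * ‖x‖ ^ 2) * (f x).toReal := by
    intro η x
    rw [norm_mul, gaussSchwartz_apply, norm_cexp_gaussExponent, Complex.norm_real,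
      Real.norm_of_nonneg ENNReal.toReal_nonneg]
  have hzero : ∀ x, gaussSchwartz d b hb 0 x * (((f x).toReal : ℝ) : ℂ) =
      ((Real.exp (-b * ‖x‖ ^ 2) * (f x).toReal : ℝ) : ℂ) := by
    intro x
    rw [gaussSchwartz_apply, gaussExponent]
    simp
  have hη : ‖K‖ * ∫ ξ, Real.exp (-s * ‖ξ + η‖ ^ 2) ∂μ ≤
      ∫ x, Real.exp (-b * ‖x‖ ^ 2) * (f x).toReal := by
    have := norm_integral_le_integral_norm
      (fun x => gaussSchwartz d b hb η x * (((f x).toReal : ℝ) : ℂ)) (μ := volume)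
    rw [key] at this
    simp_rw [hnorm] at this
    rwa [norm_mul, Complex.norm_real, Real.norm_of_nonneg (by positivity)] at this
  have h0 : ∫ x, Real.exp (-b * ‖x‖ ^ 2) * (f x).toReal =
      ‖K‖ * ∫ ξ, Real.exp (-s * ‖ξ‖ ^ 2) ∂μ := by
    have := congrArg norm (key 0)
    simp_rw [hzero] at this
    rw [integral_complex_ofReal, Complex.norm_real, norm_mul, Complex.norm_real,
      Real.norm_of_nonneg (by positivity), Real.norm_of_nonneg (by positivity)] at this
    simpa using this
  exact le_of_mul_le_mul_left (hη.trans h0.le) hK0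

/-- Comparison of a Gaussian with the Bessel weight. -/
lemma exp_neg_mul_sq_le_weight (β : ℝ) (hβ : β ∈ Set.Ioo (0 : ℝ) 1) (s : ℝ) (hs : 0 < s) (r : ℝ) :
    Real.exp (-s * r ^ 2) ≤ (1 + 1 / s) * (1 / (1 + r ^ 2)) ^ β := by
  have h1 : Real.exp (-s * r ^ 2) ≤ 1 / (1 + s * r ^ 2) := by
    rw [neg_mul, Real.exp_neg, ← one_div]
    gcongr
    linarith [Real.add_one_le_exp (s * r ^ 2)]
  have h2 : 1 / (1 + s * r ^ 2) ≤ (1 + 1 / s) * (1 / (1 + r ^ 2)) := by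
    rw [mul_one_div, div_le_div_iff₀ (by positivity) (by positivity)]
    have : (1 + 1 / s) * (1 + s * r ^ 2) = 1 + r ^ 2 + (1 / s + s * r ^ 2) := by
      field_simp; ring
    rw [this]
    have : 0 ≤ 1 / s + s * r ^ 2 := by positivity
    linarith
  have h3 : 1 / (1 + r ^ 2) ≤ (1 / (1 + r ^ 2)) ^ β := by
    refine Real.self_le_rpow_of_le_one (by positivity) ?_ hβ.2.le
    rw [div_le_one (by positivity)]
    nlinarith [sq_nonneg r]
  calc _ ≤ _ := h1
    _ ≤ _ := h2
    _ ≤ _ := by gcongr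

lemma integrable_gaussian_of_weight (d : ℕ) (β : ℝ) (hβ : β ∈ Set.Ioo (0 : ℝ) 1)
    (μ : Measure (Ed d))
    (hHolder : ∫⁻ ξ, ENNReal.ofReal ((1 / (1 + ‖ξ‖ ^ 2)) ^ β) ∂μ < ⊤)
    (s : ℝ) (hs : 0 < s) (η : Ed d) :
    Integrable (fun ξ : Ed d => Real.exp (-s * ‖ξ + η‖ ^ 2)) μ := by
  have hw : Integrable (fun ξ : Ed d => (1 / (1 + ‖ξ‖ ^ 2)) ^ β) μ := by
    refine ⟨(by fun_prop : Measurable _).aestronglyMeasurable, ?_⟩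
    rw [hasFiniteIntegral_iff_ofReal (Filter.Eventually.of_forall fun ξ => by positivity)]
    exact hHolder
  refine ((hw.const_mul (1 + 1 / (s / 2))).const_mul (Real.exp (s * ‖η‖ ^ 2))).mono'
    (by fun_prop) (Filter.Eventually.of_forall fun ξ => ?_)
  rw [Real.norm_of_nonneg (Real.exp_pos _).le]
  refine le_trans ?_ (mul_le_mul_of_nonneg_left
    (exp_neg_mul_sq_le_weight β hβ (s / 2) (by positivity) ‖ξ‖) (Real.exp_pos _).le)
  rw [← Real.exp_add, Real.exp_le_exp]
  -- `|ξ|² ≤ 2|ξ+η|² + 2|η|²`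
  have h1 : ‖ξ‖ ≤ ‖ξ + η‖ + ‖η‖ := by simpa using norm_sub_le (ξ + η) η
  have h2 : ‖ξ‖ ^ 2 ≤ 2 * ‖ξ + η‖ ^ 2 + 2 * ‖η‖ ^ 2 := by
    nlinarith [norm_nonneg ξ, norm_nonneg η, norm_nonneg (ξ + η), sq_nonneg (‖ξ + η‖ - ‖η‖)]
  nlinarith

lemma isFiniteMeasureOnCompacts_of_weight (d : ℕ) (β : ℝ) (hβ : β ∈ Set.Ioo (0 : ℝ) 1)
    (μ : Measure (Ed d))
    (hHolder : ∫⁻ ξ, ENNReal.ofReal ((1 / (1 + ‖ξ‖ ^ 2)) ^ β) ∂μ < ⊤) :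
    IsFiniteMeasureOnCompacts μ := by
  refine ⟨fun K hK => ?_⟩
  obtain ⟨R, hR⟩ := hK.isBounded.subset_closedBall (0 : Ed d)
  have hi := integrable_gaussian_of_weight d β hβ μ hHolder 1 one_pos 0
  refine (measure_mono ?_).trans_lt (hi.measure_ge_lt_top (Real.exp_pos (-R ^ 2)))
  intro x hx
  have hx' : ‖x‖ ≤ R := by simpa using hR hx
  simp only [Set.mem_ofPred_eq, add_zero, neg_mul, one_mul, Real.exp_le_exp]
  nlinarith [norm_nonneg x]

/-! ### Translates of the Bessel weight -/

/-- Gaussian subordination: `Γ(β) a^{-β} = ∫₀^∞ t^{β-1} e^{-at} dt`, for `a = 1 + r²`. -/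
lemma weight_eq_lintegral (β : ℝ) (hβ : 0 < β) (r : ℝ) :
    ENNReal.ofReal (Real.Gamma β) * ENNReal.ofReal ((1 / (1 + r ^ 2)) ^ β) =
      ∫⁻ t in Set.Ioi (0 : ℝ), ENNReal.ofReal (t ^ (β - 1) * Real.exp (-t)) *
        ENNReal.ofReal (Real.exp (-t * r ^ 2)) := by
  have h := Real.integral_rpow_mul_exp_neg_mul_Ioi hβ (r := 1 + r ^ 2) (by positivity)
  have hpos : 0 < (1 / (1 + r ^ 2)) ^ β * Real.Gamma β :=
    mul_pos (by positivity) (Real.Gamma_pos_of_pos hβ)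
  have hint : IntegrableOn (fun t : ℝ => t ^ (β - 1) * Real.exp (-((1 + r ^ 2) * t)))
      (Set.Ioi 0) := by
    by_contra hcon
    rw [integral_undef hcon] at h
    exact hpos.ne h
  rw [← ENNReal.ofReal_mul (Real.Gamma_pos_of_pos hβ).le, mul_comm, ← h,
    ofReal_integral_eq_lintegral_ofReal hint]
  · refine setLIntegral_congr_fun measurableSet_Ioi fun t ht => ?_
    have ht : 0 < t := ht
    rw [← ENNReal.ofReal_mul (by positivity), mul_assoc, ← Real.exp_add]
    ring_nf
  · filter_upwards [ae_restrict_mem measurableSet_Ioi] with t ht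
    have ht : 0 < t := ht
    positivity

lemma lintegral_weight_translate_eq (d : ℕ) (β : ℝ) (hβ : 0 < β)
    (μ : Measure (Ed d)) [SFinite μ] (η : Ed d) :
    ENNReal.ofReal (Real.Gamma β) *
        ∫⁻ ξ, ENNReal.ofReal ((1 / (1 + ‖ξ + η‖ ^ 2)) ^ β) ∂μ =
      ∫⁻ t in Set.Ioi (0 : ℝ), ENNReal.ofReal (t ^ (β - 1) * Real.exp (-t)) *
        ∫⁻ ξ, ENNReal.ofReal (Real.exp (-t * ‖ξ + η‖ ^ 2)) ∂μ := by
  rw [← lintegral_const_mul _ (by fun_prop)]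
  simp_rw [weight_eq_lintegral β hβ]
  rw [lintegral_lintegral_swap (by fun_prop)]
  refine lintegral_congr fun t => ?_
  rw [lintegral_const_mul _ (by fun_prop)]

/-- The weight `(1+|ξ|²)^{-β}` is positive definite, so among all its translates the centred one
has the largest `μ`-integral. -/
lemma lintegral_weight_translate_le (d : ℕ) (β : ℝ) (hβ : β ∈ Set.Ioo (0 : ℝ) 1)
    (μ : Measure (Ed d))
    (hHolder : ∫⁻ ξ, ENNReal.ofReal ((1 / (1 + ‖ξ‖ ^ 2)) ^ β) ∂μ < ⊤)
    (f : Ed d → ℝ≥0∞) (hP : ParsevalFT d f μ) (η : Ed d) :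
    ∫⁻ ξ, ENNReal.ofReal ((1 / (1 + ‖ξ + η‖ ^ 2)) ^ β) ∂μ ≤
      ∫⁻ ξ, ENNReal.ofReal ((1 / (1 + ‖ξ‖ ^ 2)) ^ β) ∂μ := by
  have := isFiniteMeasureOnCompacts_of_weight d β hβ μ hHolder
  have hG : ENNReal.ofReal (Real.Gamma β) ≠ 0 := by
    simpa using Real.Gamma_pos_of_pos hβ.1
  rw [← ENNReal.mul_le_mul_iff_right hG ENNReal.ofReal_ne_top,
    lintegral_weight_translate_eq d β hβ.1]
  have h0 := lintegral_weight_translate_eq d β hβ.1 μ 0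
  simp only [add_zero] at h0
  rw [h0]
  refine setLIntegral_mono' measurableSet_Ioi fun t ht => ?_
  gcongr 1
  have hi := integrable_gaussian_of_weight d β hβ μ hHolder t ht
  have hi0 := hi 0
  simp only [add_zero] at hi0
  rw [← ofReal_integral_eq_lintegral_ofReal (hi η)
      (Filter.Eventually.of_forall fun ξ => (Real.exp_pos _).le),
    ← ofReal_integral_eq_lintegral_ofReal hi0
      (Filter.Eventually.of_forall fun ξ => (Real.exp_pos _).le)]
  exact ENNReal.ofReal_le_ofReal (integral_gaussian_translate_le d f μ hP t ht η)

/-! ### The increment of the wave kernel -/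

/-- Interpolation between `|Δ| ≤ |h|` and `|Δ| ≤ 2/r` for the increment
`Δ = sin((t+h)r)/r - sin(tr)/r`. -/
lemma sinc_sub_sq_le (β : ℝ) (hβ : β ∈ Set.Ioo (0 : ℝ) 1) (M h t r : ℝ) (hM : |h| ≤ M)
    (hr : 0 ≤ r) :
    (_root_.sinc (t + h) r - _root_.sinc t r) ^ 2 ≤
      (M ^ 2 + 4) ^ β * |h| ^ (2 - 2 * β) * (1 / (1 + r ^ 2)) ^ β := by
  set δ := _root_.sinc (t + h) r - _root_.sinc t r with hδ
  have hrδ : |r * δ| ≤ |h| * r ∧ |r * δ| ≤ 2 ∧ |δ| ≤ |h| := by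
    rcases hr.eq_or_lt with h0 | h0
    · subst h0
      simp [hδ, _root_.sinc]
    · have e : r * δ = Real.sin ((t + h) * r) - Real.sin (t * r) := by
        simp only [hδ, _root_.sinc, h0.ne', if_false]
        field_simp
      have e1 : |r * δ| ≤ |h| * r := by
        rw [e]
        refine (Real.abs_sin_sub_sin_le _ _).trans_eq ?_
        rw [← sub_mul, abs_mul, abs_of_pos h0, add_sub_cancel_left]
      refine ⟨e1, ?_, ?_⟩
      · rw [e]
        refine (abs_sub _ _).trans ?_
        linarith [Real.abs_sin_le_one ((t + h) * r), Real.abs_sin_le_one (t * r)]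
      · rw [abs_mul, abs_of_pos h0, mul_comm] at e1
        exact le_of_mul_le_mul_right e1 h0
  obtain ⟨-, h2, h3⟩ := hrδ
  have hA : δ ^ 2 ≤ |h| ^ 2 := by rw [← sq_abs]; gcongr
  have hB : δ ^ 2 ≤ (M ^ 2 + 4) * (1 / (1 + r ^ 2)) := by
    rw [mul_one_div, le_div_iff₀ (by positivity)]
    have h4 : (r * δ) ^ 2 ≤ 4 := by rw [← sq_abs]; nlinarith [abs_nonneg (r * δ)]
    have h5 : |h| ^ 2 ≤ M ^ 2 := by gcongr
    nlinarith
  calc δ ^ 2 = (δ ^ 2) ^ (1 - β) * (δ ^ 2) ^ β := by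
        rw [← Real.rpow_add_of_nonneg (sq_nonneg δ) (by linarith [hβ.2]) hβ.1.le]
        simp
    _ ≤ (|h| ^ 2) ^ (1 - β) * ((M ^ 2 + 4) * (1 / (1 + r ^ 2))) ^ β := by
        have := hβ.1.le
        have : 0 ≤ 1 - β := by linarith [hβ.2]
        gcongr
    _ = _ := by
        rw [Real.mul_rpow (by positivity) (by positivity), ← Real.rpow_natCast,
          ← Real.rpow_mul (abs_nonneg h)]
        push_cast
        ring_nf

/-- Under the Hölder condition `∫ (1+|ξ|²)^{-β} μ(dξ) < ∞` with
`β ∈ (0,1)`: for any `T, M > 0` there is `C > 0` such that for all `|h| ≤ M`,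
`sup_{t ∈ [0, T∧(T−h)]} sup_η ∫ |ℱG(t+h)(ξ+η) − ℱG(t)(ξ+η)|² μ(dξ) ≤ C |h|^{2−2β}`. -/
theorem stmt11 (d : ℕ) (β : ℝ) (hβ : β ∈ Set.Ioo (0 : ℝ) 1)
    (μ : Measure (Ed d)) (hμt : IsTempered d μ)
    (hHolder : ∫⁻ ξ, ENNReal.ofReal ((1 / (1 + ‖ξ‖ ^ 2)) ^ β) ∂μ < ⊤)
    (f : Ed d → ℝ≥0∞) (hfm : Measurable f) (hfloc : LocIntENN d f)
    (hffin : ∀ x : Ed d, x ≠ 0 → f x < ⊤) (hP : ParsevalFT d f μ)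
    (T : ℝ) (hT : 0 < T) (M : ℝ) (hM : 0 < M) :
    ∃ C : ℝ, 0 < C ∧ ∀ h : ℝ, |h| ≤ M →
      ∀ t ∈ Set.Icc (0 : ℝ) (min T (T - h)), ∀ η : Ed d,
        ∫⁻ ξ, ENNReal.ofReal ((sinc (t + h) ‖ξ + η‖ - sinc t ‖ξ + η‖) ^ 2) ∂μ ≤
          ENNReal.ofReal (C * |h| ^ (2 - 2 * β)) := by
  set D := ∫⁻ ξ, ENNReal.ofReal ((1 / (1 + ‖ξ‖ ^ 2)) ^ β) ∂μ with hD
  refine ⟨(M ^ 2 + 4) ^ β * D.toReal + 1, by positivity, fun h hh t _ η => ?_⟩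
  have hA : 0 ≤ (M ^ 2 + 4) ^ β * |h| ^ (2 - 2 * β) := by positivity
  calc _ ≤ ∫⁻ ξ, ENNReal.ofReal ((M ^ 2 + 4) ^ β * |h| ^ (2 - 2 * β)) *
          ENNReal.ofReal ((1 / (1 + ‖ξ + η‖ ^ 2)) ^ β) ∂μ := by
        refine lintegral_mono fun ξ => ?_
        rw [← ENNReal.ofReal_mul hA]
        exact ENNReal.ofReal_le_ofReal (sinc_sub_sq_le β hβ M h t _ hh (norm_nonneg _))
    _ ≤ ENNReal.ofReal ((M ^ 2 + 4) ^ β * |h| ^ (2 - 2 * β)) * D := by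
        rw [lintegral_const_mul _ (by fun_prop)]
        gcongr
        exact lintegral_weight_translate_le d β hβ μ hHolder f hP η
    _ ≤ _ := by
        nth_rewrite 1 [← ENNReal.ofReal_toReal hHolder.ne]
        rw [← ENNReal.ofReal_mul hA]
        refine ENNReal.ofReal_le_ofReal ?_
        have : 0 ≤ |h| ^ (2 - 2 * β) := by positivity
        linarith
end
end

section
/- Let β ∈ (0,1) and let μ be a tempered Borel measure on ℝ^d with ∫_{ℝ^d} (1/(1+|ξ|²))^β μ(dξ) < ∞, whose Fourier transform in the Parseval sense is a locally integrable function f : ℝ^d → [0,∞] with f(x) < ∞ for every x ≠ 0. Then for any T > 0 there exists a constant C > 0 (depending on T, d, β) such that for every t ∈ [0,T], sup_{η ∈ ℝ^d} ∫_{ℝ^d} (sin(t|ξ+η|)/|ξ+η|)² μ(dξ) ≤ C t^{2−2β}, where sin(t r)/r is interpreted as t when r = 0. -/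
/-!
Since `sin²(tr)/r² ≤ min(t², 1/r²)`, interpolation (`sinc_sq_le`) bounds the integrand by
`C t^{2-2β} (1+|ξ+η|²)^{-β}` for `t ≤ T`, so the whole point is a bound on
`∫ (1+|ξ+η|²)^{-β} μ(dξ)` that is uniform in `η`. In fact `η = 0` is the worst shift
(`bessel_shift_le`). By Gaussian subordination (`subordination`) the function `(1+|ξ|²)^{-β}` is
a positive mixture of the Gaussians `e^{-s|ξ|²}`, and for each Gaussian the claim is
`integral_gauss_shift_le`: `e^{-s|ξ+η|²}` is, up to a constant, the Fourier transform of the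
Gaussian `e^{-b|x|²}`, `b = 1/(4s)`, times the character `e^{-i⟨η,x⟩}`. Parseval's identity turns
`∫ e^{-s|ξ+η|²} μ(dξ)` into the integral of this product against `f ≥ 0`, whose modulus is
largest without the character.
-/

open MeasureTheory Real
open scoped ENNReal RealInnerProductSpace

noncomputable section

open scoped ContDiff SchwartzMap

/-! ### Modulated Gaussians and their Fourier transforms -/

/-- If `q` has temperate growth and `e^q` decays faster than any polynomial, so do all derivatives
of `e^q`: by induction on the order, using `D(e^q) = e^q • Dq` and the Leibniz rule. -/
lemma cexp_decay {E : Type*} [NormedAddCommGroup E] [NormedSpace ℝ E] {q : E → ℂ}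
    (hq : q.HasTemperateGrowth)
    (h0 : ∀ k : ℕ, ∃ C : ℝ, ∀ x, (1 + ‖x‖) ^ k * ‖Complex.exp (q x)‖ ≤ C) (n : ℕ) :
    ∀ k : ℕ, ∃ C : ℝ, ∀ x,
      (1 + ‖x‖) ^ k * ‖iteratedFDeriv ℝ n (fun y => Complex.exp (q y)) x‖ ≤ C := by
  have hsm : ContDiff ℝ ∞ (fun y => Complex.exp (q y)) := hq.1.cexp
  have hdsm : ContDiff ℝ ∞ (fderiv ℝ q) := hq.1.fderiv_right (by simp)
  have hderiv : fderiv ℝ (fun y => Complex.exp (q y)) =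
      fun y => Complex.exp (q y) • fderiv ℝ q y := by
    ext1 y
    exact ((hq.1.differentiable (by simp)) y).hasFDerivAt.cexp.fderiv
  induction n using Nat.strong_induction_on with
  | _ n ih =>
    rcases n with _ | n
    · simpa using h0
    · intro k
      have hbd : ∀ i ∈ Finset.range (n + 1), ∃ C : ℝ, ∀ x,
          (1 + ‖x‖) ^ k * ((n.choose i : ℝ) *
            ‖iteratedFDeriv ℝ i (fun y => Complex.exp (q y)) x‖ *
            ‖iteratedFDeriv ℝ (n - i) (fderiv ℝ q) x‖) ≤ C := by
        intro i hi
        obtain ⟨l, A, hA⟩ := hq.2 (n - i + 1)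
        obtain ⟨B, hB⟩ := ih i (by simpa using hi) (k + l)
        have hA0 : 0 ≤ A := by simpa using (norm_nonneg _).trans (hA 0)
        refine ⟨n.choose i * A * B, fun x => ?_⟩
        have h1 : ‖iteratedFDeriv ℝ (n - i) (fderiv ℝ q) x‖ ≤ A * (1 + ‖x‖) ^ l := by
          rw [norm_iteratedFDeriv_fderiv]; exact hA x
        calc _ ≤ (1 + ‖x‖) ^ k * ((n.choose i : ℝ) *
            ‖iteratedFDeriv ℝ i (fun y => Complex.exp (q y)) x‖ * (A * (1 + ‖x‖) ^ l)) := by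
              gcongr
          _ = n.choose i * A * ((1 + ‖x‖) ^ (k + l) *
            ‖iteratedFDeriv ℝ i (fun y => Complex.exp (q y)) x‖) := by ring
          _ ≤ _ := by gcongr; exact hB x
      choose! C hC using hbd
      refine ⟨∑ i ∈ Finset.range (n + 1), C i, fun x => ?_⟩
      rw [← norm_iteratedFDeriv_fderiv, hderiv]
      calc _ ≤ (1 + ‖x‖) ^ k * ∑ i ∈ Finset.range (n + 1), (n.choose i : ℝ) *
            ‖iteratedFDeriv ℝ i (fun y => Complex.exp (q y)) x‖ *
            ‖iteratedFDeriv ℝ (n - i) (fderiv ℝ q) x‖ := by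
              gcongr
              exact norm_iteratedFDeriv_smul_le hsm hdsm x (by exact_mod_cast le_top)
        _ ≤ _ := by
              rw [Finset.mul_sum]
              exact Finset.sum_le_sum fun i hi => hC i hi x

lemma modGauss_exponent (d : ℕ) (b : ℝ) (η : Ed d) :
    (fun x : Ed d => -(b : ℂ) * (((‖x‖ ^ 2 : ℝ)) : ℂ) -
      Complex.I * ((⟪η, x⟫ : ℝ) : ℂ)).HasTemperateGrowth := by
  have h1 : (fun x : Ed d => (((‖x‖ ^ 2 : ℝ)) : ℂ)).HasTemperateGrowth :=
    Function.HasTemperateGrowth.comp Function.Complex.hasTemperateGrowth_ofReal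
      (Function.hasTemperateGrowth_norm_sq (H := Ed d))
  have h2 : (fun x : Ed d => ((⟪η, x⟫ : ℝ) : ℂ)).HasTemperateGrowth :=
    Function.HasTemperateGrowth.comp Function.Complex.hasTemperateGrowth_ofReal
      (Function.hasTemperateGrowth_inner_right η)
  fun_prop

/-- The modulated Gaussian `x ↦ e^{-b|x|² - i⟨η,x⟩}` as a Schwartz function. -/
def modGauss (d : ℕ) (b : ℝ) (hb : 0 < b) (η : Ed d) : 𝓢(Ed d, ℂ) where
  toFun x := Complex.exp (-(b : ℂ) * (((‖x‖ ^ 2 : ℝ)) : ℂ) - Complex.I * ((⟪η, x⟫ : ℝ) : ℂ))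
  smooth' := (modGauss_exponent d b η).1.cexp
  decay' k n := by
    obtain ⟨C, hC⟩ := cexp_decay (modGauss_exponent d b η) (fun k => ⟨Real.exp (k ^ 2 / (4 * b)), fun x => by
      rw [Complex.norm_exp]
      have h1 : (1 + ‖x‖) ^ k ≤ Real.exp (k * ‖x‖) := by
        rw [Real.exp_nat_mul]
        gcongr
        linarith [Real.add_one_le_exp ‖x‖]
      have h2 : (-(b : ℂ) * (((‖x‖ ^ 2 : ℝ)) : ℂ) - Complex.I * ((⟪η, x⟫ : ℝ) : ℂ)).re
          = -b * ‖x‖ ^ 2 := by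
        simp [-Complex.ofReal_pow]
      rw [h2]
      calc _ ≤ Real.exp (k * ‖x‖) * Real.exp (-b * ‖x‖ ^ 2) := by gcongr
        _ ≤ _ := by
          rw [← Real.exp_add]
          gcongr
          rw [le_div_iff₀ (by positivity)]
          nlinarith [sq_nonneg (2 * b * ‖x‖ - k)]⟩) n k
    refine ⟨C, fun x => le_trans ?_ (hC x)⟩
    gcongr
    simp

lemma modGauss_apply (d : ℕ) (b : ℝ) (hb : 0 < b) (η x : Ed d) : modGauss d b hb η x =
    Complex.exp (-(b : ℂ) * (((‖x‖ ^ 2 : ℝ)) : ℂ) - Complex.I * ((⟪η, x⟫ : ℝ) : ℂ)) := rfl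

lemma norm_modGauss (d : ℕ) (b : ℝ) (hb : 0 < b) (η x : Ed d) :
    ‖modGauss d b hb η x‖ = Real.exp (-b * ‖x‖ ^ 2) := by
  rw [modGauss_apply, Complex.norm_exp]
  simp [-Complex.ofReal_pow]

lemma FTd_modGauss (d : ℕ) (b : ℝ) (hb : 0 < b) (η ξ : Ed d) :
    FTd d (fun y => modGauss d b hb η y) ξ =
      (π / b : ℂ) ^ (d / 2 : ℂ) * ((Real.exp (-(‖ξ + η‖ ^ 2 / (4 * b))) : ℝ) : ℂ) := by
  have h := GaussianFourier.integral_cexp_neg_mul_sq_norm_add (V := Ed d) (b := (b : ℂ))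
    (by simpa using hb) (-Complex.I) (ξ + η)
  unfold FTd
  convert h using 2
  · ext x
    simp only [modGauss_apply]
    rw [← Complex.exp_add]
    congr 1
    push_cast [inner_add_left]
    ring
  · simp
  · push_cast
    congr 1
    simp
    ring

/-! ### Shifted Gaussian integrals -/

/-- A measure whose Fourier transform is a nonnegative function satisfies
`∫ e^{-s|ξ+η|²} μ(dξ) ≤ ∫ e^{-s|ξ|²} μ(dξ)`: on the physical side the shift by `η` becomes
multiplication by a unimodular character. -/
lemma integral_gauss_shift_le (d : ℕ) (μ : Measure (Ed d)) (f : Ed d → ℝ≥0∞)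
    (hP : ParsevalFT d f μ) (s : ℝ) (hs : 0 < s) (η : Ed d) :
    ∫ ξ, Real.exp (-(s * ‖ξ + η‖ ^ 2)) ∂μ ≤ ∫ ξ, Real.exp (-(s * ‖ξ‖ ^ 2)) ∂μ := by
  have hb : 0 < 1 / (4 * s) := by positivity
  set b := 1 / (4 * s) with hbdef
  set c : ℂ := (((2 * π) ^ d : ℝ)⁻¹ : ℂ) * (π / b : ℂ) ^ (d / 2 : ℂ) with hc
  have hc0 : 0 < ‖c‖ := by
    rw [norm_pos_iff, hc]
    have h1 : (π / b : ℂ) ≠ 0 := by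
      rw [← Complex.ofReal_div]
      exact_mod_cast (by positivity : (π / b) ≠ 0)
    have h2 : (((2 * π) ^ d : ℝ) : ℂ) ≠ 0 := by
      exact_mod_cast (by positivity : ((2 * π) ^ d : ℝ) ≠ 0)
    exact mul_ne_zero (inv_ne_zero h2) (by simp [Complex.cpow_eq_zero_iff, h1])
  have key : ∀ η : Ed d, ∫ x, modGauss d b hb η x * (((f x).toReal : ℝ) : ℂ) =
      c * ((∫ ξ, Real.exp (-(s * ‖ξ + η‖ ^ 2)) ∂μ : ℝ) : ℂ) := by
    intro η
    have h : ∀ ξ, FTd d (fun y => modGauss d b hb η y) ξ =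
        (π / b : ℂ) ^ (d / 2 : ℂ) * ((Real.exp (-(s * ‖ξ + η‖ ^ 2)) : ℝ) : ℂ) := by
      intro ξ
      rw [FTd_modGauss, hbdef]
      congr 4
      field_simp
    rw [hP (modGauss d b hb η), hc, mul_assoc]
    simp_rw [h]
    rw [integral_const_mul, integral_complex_ofReal]
  have hnn : ∀ η : Ed d, 0 ≤ ∫ ξ, Real.exp (-(s * ‖ξ + η‖ ^ 2)) ∂μ :=
    fun η => integral_nonneg fun _ => (Real.exp_pos _).le
  have h0 : ‖c‖ * ∫ ξ, Real.exp (-(s * ‖ξ‖ ^ 2)) ∂μ =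
      ∫ x, Real.exp (-b * ‖x‖ ^ 2) * (f x).toReal := by
    have h := key 0
    have hr : ∀ x, modGauss d b hb 0 x * (((f x).toReal : ℝ) : ℂ) =
        ((Real.exp (-b * ‖x‖ ^ 2) * (f x).toReal : ℝ) : ℂ) := by
      intro x
      rw [modGauss_apply]
      push_cast
      simp
    simp_rw [hr, add_zero] at h
    rw [integral_complex_ofReal] at h
    have h' := congrArg norm h
    rw [norm_mul, Complex.norm_real, Complex.norm_real, Real.norm_of_nonneg
      (integral_nonneg fun _ => by positivity), Real.norm_of_nonneg
      (integral_nonneg fun _ => (Real.exp_pos _).le)] at h'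
    exact h'.symm
  have h1 : ‖c‖ * ∫ ξ, Real.exp (-(s * ‖ξ + η‖ ^ 2)) ∂μ ≤
      ∫ x, Real.exp (-b * ‖x‖ ^ 2) * (f x).toReal := by
    have hnorm := congrArg norm (key η)
    rw [norm_mul, Complex.norm_real, Real.norm_of_nonneg (hnn η)] at hnorm
    rw [← hnorm]
    -- No integrability is needed: `‖∫ F‖ ≤ ∫ ‖F‖` also holds when both sides are zero by
    -- convention.
    refine (norm_integral_le_integral_norm _).trans_eq ?_
    congr 1
    ext x
    rw [norm_mul, norm_modGauss, Complex.norm_real, Real.norm_of_nonneg ENNReal.toReal_nonneg]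
  rw [← h0] at h1
  exact le_of_mul_le_mul_left h1 hc0

lemma one_add_sq_shift {d : ℕ} (ξ η : Ed d) :
    1 + ‖ξ‖ ^ 2 ≤ 2 * (1 + ‖η‖ ^ 2) * (1 + ‖ξ + η‖ ^ 2) := by
  have h : ‖ξ‖ ≤ ‖ξ + η‖ + ‖η‖ := by simpa using norm_sub_le (ξ + η) η
  have h2 : ‖ξ‖ ^ 2 ≤ (‖ξ + η‖ + ‖η‖) ^ 2 := by gcongr
  nlinarith [sq_nonneg (‖ξ + η‖ - ‖η‖), sq_nonneg (‖ξ + η‖ * ‖η‖)]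

/-- Shifted Gaussians are integrable for any measure satisfying the Hölder condition. -/
lemma integrable_gauss_shift (d : ℕ) (β : ℝ) (hβ : β ∈ Set.Ioo (0 : ℝ) 1) (μ : Measure (Ed d))
    (hH : ∫⁻ ξ, ENNReal.ofReal ((1 / (1 + ‖ξ‖ ^ 2)) ^ β) ∂μ < ⊤)
    (s : ℝ) (hs : 0 < s) (η : Ed d) :
    Integrable (fun ξ => Real.exp (-(s * ‖ξ + η‖ ^ 2))) μ := by
  have hmeas : Measurable (fun ξ : Ed d => (1 / (1 + ‖ξ‖ ^ 2)) ^ β) := by fun_prop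
  have hint : Integrable (fun ξ : Ed d => (1 / (1 + ‖ξ‖ ^ 2)) ^ β) μ :=
    (lintegral_ofReal_ne_top_iff_integrable hmeas.aestronglyMeasurable
      (Filter.Eventually.of_forall fun ξ => by positivity)).1 hH.ne
  refine (hint.const_mul ((1 + 1 / s) * (2 * (1 + ‖η‖ ^ 2)))).mono'
    (by fun_prop) (Filter.Eventually.of_forall fun ξ => ?_)
  rw [Real.norm_of_nonneg (Real.exp_pos _).le]
  have hu : 1 / (1 + ‖ξ‖ ^ 2) ≤ (1 / (1 + ‖ξ‖ ^ 2)) ^ β := by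
    refine Real.self_le_rpow_of_le_one (by positivity) ?_ hβ.2.le
    rw [div_le_one (by positivity)]
    nlinarith [sq_nonneg ‖ξ‖]
  refine le_trans ?_ (mul_le_mul_of_nonneg_left hu (by positivity))
  rw [mul_one_div, le_div_iff₀ (by positivity), Real.exp_neg, inv_mul_le_iff₀ (Real.exp_pos _)]
  have h1 := Real.add_one_le_exp (s * ‖ξ + η‖ ^ 2)
  have h2 : 1 + ‖ξ + η‖ ^ 2 ≤ Real.exp (s * ‖ξ + η‖ ^ 2) * (1 + 1 / s) := by
    refine le_trans ?_ (mul_le_mul_of_nonneg_right h1 (by positivity))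
    have : (s * ‖ξ + η‖ ^ 2 + 1) * (1 + 1 / s) =
      1 + ‖ξ + η‖ ^ 2 + s * ‖ξ + η‖ ^ 2 + 1 / s := by field_simp; ring
    rw [this]
    have : 0 ≤ s * ‖ξ + η‖ ^ 2 + 1 / s := by positivity
    linarith
  calc _ ≤ _ := one_add_sq_shift ξ η
    _ ≤ 2 * (1 + ‖η‖ ^ 2) * (Real.exp (s * ‖ξ + η‖ ^ 2) * (1 + 1 / s)) := by gcongr
    _ = _ := by ring

lemma sigmaFinite_of_holder (d : ℕ) (β : ℝ) (hβ : β ∈ Set.Ioo (0 : ℝ) 1) (μ : Measure (Ed d))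
    (hH : ∫⁻ ξ, ENNReal.ofReal ((1 / (1 + ‖ξ‖ ^ 2)) ^ β) ∂μ < ⊤) : SigmaFinite μ := by
  have : IsLocallyFiniteMeasure μ := ⟨fun x => by
    refine ⟨Metric.ball x 1, Metric.ball_mem_nhds x one_pos, ?_⟩
    have hi := (integrable_gauss_shift d β hβ μ hH 1 one_pos (-x)).measure_ge_lt_top
      (Real.exp_pos (-1))
    refine (measure_mono fun y hy => ?_).trans_lt hi
    rw [Metric.mem_ball, dist_eq_norm] at hy
    simp only [Set.mem_ofPred_eq, ← sub_eq_add_neg, one_mul]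
    gcongr
    nlinarith [norm_nonneg (y - x)]⟩
  infer_instance

/-! ### Shifted integrals of the Bessel potential -/

/-- Gaussian subordination: `Γ(β) (1+r²)^{-β} = ∫₀^∞ s^{β-1} e^{-s} e^{-s r²} ds`. -/
lemma subordination (β : ℝ) (hβ : 0 < β) (r : ℝ) :
    ENNReal.ofReal (Real.Gamma β) * ENNReal.ofReal ((1 / (1 + r ^ 2)) ^ β) =
      ∫⁻ s in Set.Ioi (0 : ℝ), ENNReal.ofReal (s ^ (β - 1) * Real.exp (-s)) *
        ENNReal.ofReal (Real.exp (-(s * r ^ 2))) := by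
  have hG := Real.Gamma_pos_of_pos hβ
  have key := Real.integral_rpow_mul_exp_neg_mul_Ioi hβ (by positivity : 0 < 1 + r ^ 2)
  have hint : IntegrableOn (fun t => t ^ (β - 1) * Real.exp (-((1 + r ^ 2) * t))) (Set.Ioi 0) :=
    .of_integral_ne_zero (by rw [key]; positivity)
  rw [← ENNReal.ofReal_mul hG.le, mul_comm, ← key, ofReal_integral_eq_lintegral_ofReal hint
    (ae_restrict_of_forall_mem measurableSet_Ioi fun s (hs : 0 < s) => by positivity)]
  refine setLIntegral_congr_fun measurableSet_Ioi fun s (hs : 0 < s) => ?_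
  rw [← ENNReal.ofReal_mul (by positivity), mul_assoc, ← Real.exp_add]
  congr 3
  ring

/-- `η = 0` maximises `∫ (1+|ξ+η|²)^{-β} μ(dξ)`. -/
lemma bessel_shift_le (d : ℕ) (β : ℝ) (hβ : β ∈ Set.Ioo (0 : ℝ) 1) (μ : Measure (Ed d))
    (hH : ∫⁻ ξ, ENNReal.ofReal ((1 / (1 + ‖ξ‖ ^ 2)) ^ β) ∂μ < ⊤)
    (f : Ed d → ℝ≥0∞) (hP : ParsevalFT d f μ) (η : Ed d) :
    ∫⁻ ξ, ENNReal.ofReal ((1 / (1 + ‖ξ + η‖ ^ 2)) ^ β) ∂μ ≤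
      ∫⁻ ξ, ENNReal.ofReal ((1 / (1 + ‖ξ‖ ^ 2)) ^ β) ∂μ := by
  have := sigmaFinite_of_holder d β hβ μ hH
  have hrep : ∀ η : Ed d,
      ENNReal.ofReal (Real.Gamma β) * ∫⁻ ξ, ENNReal.ofReal ((1 / (1 + ‖ξ + η‖ ^ 2)) ^ β) ∂μ =
      ∫⁻ s in Set.Ioi (0 : ℝ), ENNReal.ofReal (s ^ (β - 1) * Real.exp (-s)) *
        ENNReal.ofReal (∫ ξ, Real.exp (-(s * ‖ξ + η‖ ^ 2)) ∂μ) := by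
    intro η
    rw [← lintegral_const_mul _ (by fun_prop)]
    simp_rw [subordination β hβ.1]
    rw [lintegral_lintegral_swap (by fun_prop)]
    refine setLIntegral_congr_fun measurableSet_Ioi fun s (hs : 0 < s) => ?_
    rw [lintegral_const_mul _ (by fun_prop), ofReal_integral_eq_lintegral_ofReal
      (integrable_gauss_shift d β hβ μ hH s hs η)
      (Filter.Eventually.of_forall fun _ => (Real.exp_pos _).le)]
  have h0 := hrep 0
  simp only [add_zero] at h0
  have hG : ENNReal.ofReal (Real.Gamma β) ≠ 0 := by
    simpa using Real.Gamma_pos_of_pos hβ.1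
  rw [← ENNReal.mul_le_mul_iff_right hG ENNReal.ofReal_ne_top, hrep η, h0]
  refine setLIntegral_mono' measurableSet_Ioi fun s (hs : 0 < s) => ?_
  refine mul_le_mul_right (ENNReal.ofReal_le_ofReal ?_) _
  exact integral_gauss_shift_le d μ f hP s hs η

/-! ### The wave kernel -/

/-- Interpolation of `sin²(tr)/r² ≤ min(t², 1/r²)` between its two bounds. -/
lemma sinc_sq_le_s12 (β : ℝ) (hβ : β ∈ Set.Ioo (0 : ℝ) 1) (T t r : ℝ) (ht : t ∈ Set.Icc 0 T)
    (hr : 0 ≤ r) :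
    _root_.sinc t r ^ 2 ≤ (T ^ 2 + 1) ^ β * t ^ (2 - 2 * β) * (1 / (1 + r ^ 2)) ^ β := by
  obtain ⟨ht0, htT⟩ := ht
  have h1 : _root_.sinc t r ^ 2 ≤ t ^ 2 := by
    unfold _root_.sinc
    split_ifs with h
    · rfl
    · have hr' : 0 < r := lt_of_le_of_ne hr (Ne.symm h)
      rw [div_pow, div_le_iff₀ (by positivity), ← mul_pow]
      exact Real.sin_sq_le_sq
  have h2 : _root_.sinc t r ^ 2 ≤ (T ^ 2 + 1) * (1 / (1 + r ^ 2)) := by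
    have hs : _root_.sinc t r ^ 2 * r ^ 2 ≤ 1 := by
      unfold _root_.sinc
      split_ifs with h
      · simp [h]
      · rw [div_pow, div_mul_cancel₀ _ (by positivity)]
        exact Real.sin_sq_le_one _
    rw [mul_one_div, le_div_iff₀ (by positivity)]
    nlinarith [pow_le_pow_left₀ ht0 htT 2]
  have hn := sq_nonneg (_root_.sinc t r)
  calc _root_.sinc t r ^ 2 = (_root_.sinc t r ^ 2) ^ (1 - β) * (_root_.sinc t r ^ 2) ^ β := by
        rw [← Real.rpow_add' hn (by norm_num)]; simp
    _ ≤ (t ^ 2) ^ (1 - β) * ((T ^ 2 + 1) * (1 / (1 + r ^ 2))) ^ β := by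
        have := hβ.1.le
        have : 0 ≤ 1 - β := by linarith [hβ.2]
        gcongr
    _ = _ := by
        rw [Real.mul_rpow (by positivity) (by positivity), ← Real.rpow_natCast, ← Real.rpow_mul ht0]
        push_cast
        rw [show 2 * (1 - β) = 2 - 2 * β by ring]
        ring

/-- Under the Hölder condition `∫ (1+|ξ|²)^{-β} μ(dξ) < ∞` with
`β ∈ (0,1)`: for any `T > 0` there is `C > 0` such that for all `t ∈ [0,T]`,
`sup_η ∫ (sin(t|ξ+η|)/|ξ+η|)² μ(dξ) ≤ C t^{2−2β}`. -/
theorem stmt12 (d : ℕ) (β : ℝ) (hβ : β ∈ Set.Ioo (0 : ℝ) 1)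
    (μ : Measure (Ed d)) (hμt : IsTempered d μ)
    (hHolder : ∫⁻ ξ, ENNReal.ofReal ((1 / (1 + ‖ξ‖ ^ 2)) ^ β) ∂μ < ⊤)
    (f : Ed d → ℝ≥0∞) (hfm : Measurable f) (hfloc : LocIntENN d f)
    (hffin : ∀ x : Ed d, x ≠ 0 → f x < ⊤) (hP : ParsevalFT d f μ)
    (T : ℝ) (hT : 0 < T) :
    ∃ C : ℝ, 0 < C ∧ ∀ t ∈ Set.Icc (0 : ℝ) T, ∀ η : Ed d,
      ∫⁻ ξ, ENNReal.ofReal ((sinc t ‖ξ + η‖) ^ 2) ∂μ ≤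
        ENNReal.ofReal (C * t ^ (2 - 2 * β)) := by
  set I := ∫⁻ ξ, ENNReal.ofReal ((1 / (1 + ‖ξ‖ ^ 2)) ^ β) ∂μ with hI
  -- The summand `1` keeps the constant positive when `μ = 0`.
  refine ⟨(T ^ 2 + 1) ^ β * (I.toReal + 1), by positivity, fun t ht η => ?_⟩
  have ht0 := ht.1
  calc ∫⁻ ξ, ENNReal.ofReal ((sinc t ‖ξ + η‖) ^ 2) ∂μ
      ≤ ∫⁻ ξ, ENNReal.ofReal ((T ^ 2 + 1) ^ β * t ^ (2 - 2 * β)) *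
          ENNReal.ofReal ((1 / (1 + ‖ξ + η‖ ^ 2)) ^ β) ∂μ := by
        refine lintegral_mono fun ξ => ?_
        rw [← ENNReal.ofReal_mul (by positivity)]
        exact ENNReal.ofReal_le_ofReal (sinc_sq_le_s12 β hβ T t _ ht (norm_nonneg _))
    _ = ENNReal.ofReal ((T ^ 2 + 1) ^ β * t ^ (2 - 2 * β)) *
          ∫⁻ ξ, ENNReal.ofReal ((1 / (1 + ‖ξ + η‖ ^ 2)) ^ β) ∂μ :=
        lintegral_const_mul _ (by fun_prop)
    _ ≤ ENNReal.ofReal ((T ^ 2 + 1) ^ β * t ^ (2 - 2 * β)) * ENNReal.ofReal (I.toReal + 1) := by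
        gcongr
        refine (bessel_shift_le d β hβ μ hHolder f hP η).trans ?_
        rw [← hI, ← ENNReal.ofReal_toReal hHolder.ne]
        exact ENNReal.ofReal_le_ofReal (by simp)
    _ = ENNReal.ofReal ((T ^ 2 + 1) ^ β * (I.toReal + 1) * t ^ (2 - 2 * β)) := by
        rw [← ENNReal.ofReal_mul (by positivity)]
        congr 1
        ring
end
end
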